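/- arXiv:0710.1461 — 3 statements merged into one kernel-verified Lean document; each statement's English description precedes it below -/
import Mathlib

section
/- Let (Y, ‖·‖) be a normed space and X its topological dual with weak-* topology σ(X,Y). Let (g_n) be real-valued convex functions on Y converging pointwise to g, with |g_n(y)| ≤ c(1 + ‖y‖) for all n and y and some c > 0. Then the convex conjugates f_n = g_n* Γ-converge to f = g* on X with respect to σ(X,Y). -/
open Filter Topology

lemma aux_scale {a K : ℝ} (h : ∀ t : ℝ, 1 ≤ t → t * a ≤ K) : a ≤ 0 := by
  by_contra ha
  push Not at ha
  have h1 := h (max 1 ((K + 1) / a)) (le_max_left _ _)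
  have h2 : (K + 1) / a * a ≤ max 1 ((K + 1) / a) * a :=
    mul_le_mul_of_nonneg_right (le_max_right _ _) ha.le
  rw [div_mul_cancel₀ _ ha.ne'] at h2
  linarith

lemma aux_scale_conv {Y : Type*} [NormedAddCommGroup Y] [NormedSpace ℝ Y]
    {g : Y → ℝ} (hconv : ConvexOn ℝ Set.univ g) (y w : Y) (t : ℝ) (ht : 1 ≤ t) :
    t * (g (y + w) - g y) ≤ g (y + t • w) - g y := by
  have ht0 : 0 < t := by linarith
  have hi : t⁻¹ ≤ 1 := inv_le_one_of_one_le₀ ht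
  have h := hconv.2 (Set.mem_univ y) (Set.mem_univ (y + t • w))
    (show (0:ℝ) ≤ 1 - t⁻¹ by linarith) (show (0:ℝ) ≤ t⁻¹ by positivity) (by ring)
  have e : (1 - t⁻¹) • y + t⁻¹ • (y + t • w) = y + w := by
    rw [smul_add, smul_smul, inv_mul_cancel₀ ht0.ne']
    module
  rw [e] at h
  simp only [smul_eq_mul] at h
  have h2 := mul_le_mul_of_nonneg_left h ht0.le
  have e2 : t * ((1 - t⁻¹) * g y + t⁻¹ * g (y + t • w)) = (t - 1) * g y + g (y + t • w) := by
    field_simp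
  rw [e2] at h2
  linarith

lemma aux_lip {Y : Type*} [NormedAddCommGroup Y] [NormedSpace ℝ Y]
    {g : Y → ℝ} (hconv : ConvexOn ℝ Set.univ g) {c : ℝ} (hc : 0 < c)
    (hbound : ∀ y, |g y| ≤ c * (1 + ‖y‖)) (y z : Y) : g z - g y ≤ c * ‖z - y‖ := by
  have : g z - g y - c * ‖z - y‖ ≤ 0 := by
    apply aux_scale (K := 2 * (c * (1 + ‖y‖)))
    intro t ht
    have h := aux_scale_conv hconv y (z - y) t ht
    rw [add_sub_cancel] at h
    have h1 := (abs_le.1 (hbound (y + t • (z - y)))).2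
    have h2 := (abs_le.1 (hbound y)).1
    have h3 : ‖y + t • (z - y)‖ ≤ ‖y‖ + t * ‖z - y‖ := by
      refine (norm_add_le _ _).trans ?_
      rw [norm_smul, Real.norm_of_nonneg (by linarith)]
    have h4 := mul_le_mul_of_nonneg_left h3 hc.le
    nlinarith
  linarith

lemma aux_unif {Y : Type*} [NormedAddCommGroup Y] [NormedSpace ℝ Y]
    (g : ℕ → Y → ℝ) (glim : Y → ℝ) (hlim : ∀ y, Tendsto (fun n => g n y) atTop (𝓝 (glim y)))
    (c : ℝ) (hc : 0 < c) (hlip : ∀ n y z, g n z - g n y ≤ c * ‖z - y‖)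
    (K : Set Y) (hK : IsCompact K) (η : ℝ) (hη : 0 < η) :
    ∀ᶠ n in atTop, ∀ v ∈ K, glim v - η ≤ g n v := by
  have hl : ∀ y z, glim z - glim y ≤ c * ‖z - y‖ := fun y z =>
    le_of_tendsto ((hlim z).sub (hlim y)) (Eventually.of_forall fun n => hlip n y z)
  obtain ⟨t, htf, ht⟩ := Metric.totallyBounded_iff.1 hK.totallyBounded (η / (4 * c)) (by positivity)
  have : ∀ᶠ n in atTop, ∀ y ∈ t, glim y - η / 4 < g n y := by
    rw [htf.eventually_all]
    intro y _
    exact (hlim y).eventually (lt_mem_nhds (by linarith))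
  filter_upwards [this] with n hn v hv
  obtain ⟨y, hy, hvy⟩ := Set.mem_iUnion₂.1 (ht hv)
  rw [Metric.mem_ball, dist_eq_norm] at hvy
  have h1 := hl y v
  have h2 := hlip n v y
  rw [norm_sub_rev] at h2
  have h3 : c * ‖v - y‖ ≤ η / 4 := by
    have := mul_le_mul_of_nonneg_left hvy.le hc.le
    have e : c * (η / (4 * c)) = η / 4 := by field_simp
    linarith
  have := hn y hy
  linarith

lemma aux_ext {Y : Type*} [NormedAddCommGroup Y] [NormedSpace ℝ Y]
    {g : Y → ℝ} (hconv : ConvexOn ℝ Set.univ g) (hcont : Continuous g)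
    (L : Submodule ℝ Y) (x : Y →L[ℝ] ℝ) (M δ : ℝ) (hδ : 0 < δ)
    (h : ∀ v ∈ L, x v - δ * ‖v‖ ≤ g v + M) :
    ∃ x' : Y →L[ℝ] ℝ, (∀ y, x' y ≤ g y + M) ∧ ∀ v ∈ L, |x' v - x v| ≤ δ * ‖v‖ := by
  let s : Set (Y × ℝ) := {p | g p.1 + M < p.2}
  let t : Set (Y × ℝ) := {p | p.1 ∈ L ∧ p.2 ≤ x p.1 - δ * ‖p.1‖}
  have hs : Convex ℝ s := by
    intro p hp q hq a b ha hb hab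
    have h1 := hconv.2 (Set.mem_univ p.1) (Set.mem_univ q.1) ha hb hab
    simp only [s, Set.mem_setOf_eq, Prod.fst_add, Prod.snd_add, Prod.smul_fst, Prod.smul_snd,
      smul_eq_mul] at *
    have hb' : b = 1 - a := by linarith
    subst hb'
    rcases ha.eq_or_lt with rfl | ha
    · simp at *; linarith
    · nlinarith [mul_lt_mul_of_pos_left hp ha, mul_le_mul_of_nonneg_left hq.le hb]
  have hso : IsOpen s := isOpen_lt (by fun_prop) (by fun_prop)
  have ht : Convex ℝ t := by
    intro p hp q hq a b ha hb hab
    simp only [t, Set.mem_setOf_eq, Prod.fst_add, Prod.snd_add, Prod.smul_fst, Prod.smul_snd,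
      smul_eq_mul] at *
    refine ⟨L.add_mem (L.smul_mem _ hp.1) (L.smul_mem _ hq.1), ?_⟩
    have h1 : ‖a • p.1 + b • q.1‖ ≤ a * ‖p.1‖ + b * ‖q.1‖ := by
      refine (norm_add_le _ _).trans ?_
      rw [norm_smul, norm_smul, Real.norm_of_nonneg ha, Real.norm_of_nonneg hb]
    have h2 := mul_le_mul_of_nonneg_left h1 hδ.le
    have h3 := mul_le_mul_of_nonneg_left hp.2 ha
    have h4 := mul_le_mul_of_nonneg_left hq.2 hb
    simp only [map_add, map_smul, smul_eq_mul]
    nlinarith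
  have hd : Disjoint s t := by
    rw [Set.disjoint_left]
    intro p hp hq
    have := h p.1 hq.1
    have h1 : g p.1 + M < p.2 := hp
    have h2 := hq.2
    linarith
  obtain ⟨f, u, hfs, hft⟩ := geometric_hahn_banach_open hs hso ht hd
  set l : Y →L[ℝ] ℝ := f.comp (ContinuousLinearMap.inl ℝ Y ℝ) with hl
  set α : ℝ := f (0, 1) with hα
  have hf : ∀ y r, f (y, r) = l y + r * α := by
    intro y r
    have : ((y, r) : Y × ℝ) = (y, 0) + r • (0, 1) := by simp
    rw [this, map_add, map_smul]
    simp [hl, hα]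
  have hT : ∀ v ∈ L, u ≤ l v + (x v - δ * ‖v‖) * α := by
    intro v hv
    rw [← hf]
    exact hft _ ⟨hv, le_rfl⟩
  have hS : ∀ y r, g y + M < r → l y + r * α < u := by
    intro y r hr
    rw [← hf]
    exact hfs _ hr
  have hu : u ≤ 0 := by simpa using hT 0 L.zero_mem
  have hα0 : α < 0 := by
    have h1 := hS 0 (max 1 (g 0 + M + 1)) (lt_of_lt_of_le (by linarith) (le_max_right _ _))
    have h2 := le_max_left 1 (g 0 + M + 1)
    rw [map_zero] at h1
    by_contra hh
    push Not at hh
    nlinarith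
  have hS' : ∀ y, l y + (g y + M) * α ≤ u := by
    intro y
    apply le_of_forall_pos_le_add
    intro ε hε
    have := hS y (g y + M + ε / (-α)) (by have := div_pos hε (neg_pos.2 hα0); linarith)
    have e : ε / (-α) * α = -ε := by
      have := hα0.ne
      rw [div_neg, neg_mul, div_mul_cancel₀ _ this]
    nlinarith
  have key : ∀ v ∈ L, x v - δ * ‖v‖ ≤ ((-α)⁻¹ • l) v := by
    intro v hv
    have : (x v - δ * ‖v‖) * (-α) - l v ≤ 0 := by
      apply aux_scale (K := -u)
      intro t ht
      have := hT (t • v) (L.smul_mem _ hv)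
      rw [norm_smul, Real.norm_of_nonneg (by linarith), map_smul, map_smul, smul_eq_mul,
        smul_eq_mul] at this
      nlinarith
    simp only [ContinuousLinearMap.smul_apply, smul_eq_mul]
    rw [inv_mul_eq_div, le_div_iff₀ (by linarith)]
    linarith
  refine ⟨(-α)⁻¹ • l, ?_, ?_⟩
  · intro y
    simp only [ContinuousLinearMap.smul_apply, smul_eq_mul]
    rw [inv_mul_eq_div, div_le_iff₀ (by linarith)]
    have := hS' y
    linarith
  · intro v hv
    have h1 := key v hv
    have h2 := key (-v) (L.neg_mem hv)
    rw [norm_neg, map_neg, map_neg] at h2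
    rw [abs_le]
    constructor <;> linarith

lemma aux_nhds {Y : Type*} [NormedAddCommGroup Y] [NormedSpace ℝ Y]
    (x : WeakDual ℝ Y) (U : Set (WeakDual ℝ Y)) (hU : U ∈ 𝓝 x) :
    ∃ (I : Finset Y) (ε : ℝ), 0 < ε ∧
      ∀ x' : WeakDual ℝ Y, (∀ y ∈ I, |x' y - x y| < ε) → x' ∈ U := by
  have hind : 𝓝 x = comap (fun (x : WeakDual ℝ Y) (y : Y) => x y) (𝓝 fun y => x y) :=
    nhds_induced _ _
  rw [hind, mem_comap] at hU
  obtain ⟨V, hV, hVU⟩ := hU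
  rw [nhds_pi, Filter.mem_pi'] at hV
  obtain ⟨I, t, ht, hI⟩ := hV
  have : ∀ᶠ ε in 𝓝[>] (0:ℝ), ∀ y ∈ I, Metric.ball (x y) ε ⊆ t y := by
    rw [Finset.eventually_all]
    intro y _
    obtain ⟨r, hr, hrt⟩ := Metric.mem_nhds_iff.1 (ht y)
    filter_upwards [Ioo_mem_nhdsGT hr] with ε hε
    exact (Metric.ball_subset_ball hε.2.le).trans hrt
  obtain ⟨ε, h1, h2⟩ := (this.and self_mem_nhdsWithin).exists
  refine ⟨I, ε, h2, fun x' hx' => hVU (hI ?_)⟩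
  intro y hy
  exact h1 y hy (by rw [Metric.mem_ball, Real.dist_eq]; exact hx' y hy)

lemma aux_upper {Y : Type*} [NormedAddCommGroup Y] [NormedSpace ℝ Y]
    (g : ℕ → Y → ℝ) (hconv : ∀ n, ConvexOn ℝ Set.univ (g n))
    (glim : Y → ℝ) (hlim : ∀ y, Tendsto (fun n => g n y) atTop (𝓝 (glim y)))
    (c : ℝ) (hc : 0 < c) (hbound : ∀ n y, |g n y| ≤ c * (1 + ‖y‖))
    (x : WeakDual ℝ Y) (U : Set (WeakDual ℝ Y)) (hU : U ∈ 𝓝 x) (M₀ M : ℝ) (hM : M₀ < M)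
    (hx : ∀ y, x y - glim y ≤ M₀) :
    ∀ᶠ n in atTop, ∃ x' ∈ U, ∀ y, x' y - g n y ≤ M := by
  have hlip : ∀ n y z, g n z - g n y ≤ c * ‖z - y‖ := fun n => aux_lip (hconv n) hc (hbound n)
  obtain ⟨I, ε, hε, hI⟩ := aux_nhds x U hU
  let L : Submodule ℝ Y := Submodule.span ℝ (I : Set Y)
  haveI : FiniteDimensional ℝ L := FiniteDimensional.span_finset ℝ I
  set S : ℝ := 1 + ∑ y ∈ I, ‖y‖ with hS
  have hS1 : 0 < S := by positivity
  set δ : ℝ := ε / (2 * S) with hδdef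
  have hδ : 0 < δ := by positivity
  set R : ℝ := 1 + 2 * |M + c| / δ + 2 * |c - M| / δ with hR
  have hR0 : 0 < R := by positivity
  have hR1 : |M + c| ≤ R * (δ / 2) := by
    have : R * (δ / 2) = δ / 2 + |M + c| + |c - M| := by rw [hR]; field_simp
    have := abs_nonneg (c - M)
    linarith
  have hR2 : |c - M| ≤ R * (δ / 2) := by
    have : R * (δ / 2) = δ / 2 + |M + c| + |c - M| := by rw [hR]; field_simp
    have := abs_nonneg (M + c)
    linarith
  have hK : IsCompact ((fun v : L => (v : Y)) '' Metric.closedBall 0 R) :=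
    (isCompact_closedBall (0 : L) R).image continuous_subtype_val
  filter_upwards [aux_unif g glim hlim c hc hlip _ hK (M - M₀) (by linarith)] with n hn
  have hball : ∀ v ∈ L, ‖v‖ ≤ R → x v ≤ g n v + M := by
    intro v hv hvR
    have h1 := hn v ⟨⟨v, hv⟩, by simpa using hvR, rfl⟩
    have h2 := hx v
    linarith
  have hall : ∀ v ∈ L, x v - δ * ‖v‖ ≤ g n v + M := by
    intro v hv
    rcases le_or_gt ‖v‖ R with hvR | hvR
    · have := hball v hv hvR
      have : 0 ≤ δ * ‖v‖ := by positivity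
      linarith
    · have hv0 : 0 < ‖v‖ := hR0.trans hvR
      set t : ℝ := ‖v‖ / R with ht
      have htR : t * R = ‖v‖ := by rw [ht]; field_simp
      have ht1 : 1 ≤ t := by rw [ht, one_le_div hR0]; exact hvR.le
      have ht0 : 0 < t := by linarith
      have hc1 := aux_scale_conv (hconv n) 0 (t⁻¹ • v) t ht1
      rw [smul_smul, mul_inv_cancel₀ ht0.ne', one_smul, zero_add, zero_add] at hc1
      have hb := hball (t⁻¹ • v) (L.smul_mem _ hv) (by
        rw [norm_smul, norm_inv, Real.norm_of_nonneg ht0.le, inv_mul_eq_div, div_le_iff₀ ht0]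
        linarith)
      rw [map_smul, smul_eq_mul] at hb
      have hb2 := mul_le_mul_of_nonneg_left hb ht0.le
      rw [← mul_assoc, mul_inv_cancel₀ ht0.ne', one_mul] at hb2
      have h0 := abs_le.1 (hbound n 0)
      rw [norm_zero, add_zero, mul_one] at h0
      have a1 : M + c ≤ R * (δ / 2) := (le_abs_self _).trans hR1
      have a2 : c - M ≤ R * (δ / 2) := (le_abs_self _).trans hR2
      have a3 := mul_le_mul_of_nonneg_left a1 ht0.le
      have a4 : R * (δ / 2) ≤ ‖v‖ * (δ / 2) := mul_le_mul_of_nonneg_right hvR.le (by positivity)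
      have a5 : t * (R * (δ / 2)) = ‖v‖ * (δ / 2) := by rw [← mul_assoc, htR]
      have a6 := mul_le_mul_of_nonneg_left h0.2 ht0.le
      linarith
  have hcont : Continuous (g n) := by
    have : LipschitzWith c.toNNReal (g n) := by
      apply LipschitzWith.of_le_add_mul
      intro y z
      rw [Real.coe_toNNReal _ hc.le, dist_eq_norm]
      have := hlip n z y
      linarith
    exact this.continuous
  obtain ⟨x', h1, h2⟩ := aux_ext (hconv n) hcont L (WeakDual.toStrongDual x) M δ hδ hall
  refine ⟨StrongDual.toWeakDual x', hI _ ?_, ?_⟩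
  · intro y hy
    have h3 : |x' y - x y| ≤ δ * ‖y‖ := h2 y (Submodule.subset_span hy)
    have h4 : ‖y‖ ≤ S := by
      have := Finset.single_le_sum (f := fun y => ‖y‖) (fun i _ => norm_nonneg i) hy
      linarith
    have h5 : δ * S = ε / 2 := by rw [hδdef]; field_simp
    have h6 := mul_le_mul_of_nonneg_left h4 hδ.le
    have h7 : |x' y - x y| < ε := by linarith
    exact h7
  · intro y
    have h3 : x' y - g n y ≤ M := by linarith [h1 y]
    exact h3

/-- Corollary `app-A2`: `Y` a normed space, `X = Y'` its dual with the weak-* topology;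
`(g_n)` real-valued convex functions on `Y` converging pointwise to `g`, with
`|g_n(y)| ≤ c(1+‖y‖)`.  Then the convex conjugates `f_n = g_n*` Γ-converge to `f = g*`
on `X` for `σ(X,Y)`: for every `x`, both
`sup_{U∈N(x)} liminf_n inf_{x'∈U} f_n(x')` and `sup_{U∈N(x)} limsup_n inf_{x'∈U} f_n(x')`
equal `f(x)`. -/
theorem stmt8 {Y : Type*} [NormedAddCommGroup Y] [NormedSpace ℝ Y]
    (g : ℕ → Y → ℝ) (hconv : ∀ n, ConvexOn ℝ Set.univ (g n))
    (glim : Y → ℝ) (hlim : ∀ y, Tendsto (fun n => g n y) atTop (𝓝 (glim y)))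
    (c : ℝ) (hc : 0 < c) (hbound : ∀ n y, |g n y| ≤ c * (1 + ‖y‖)) :
    ∀ x : WeakDual ℝ Y,
      (⨆ U ∈ 𝓝 x, atTop.liminf fun n =>
          ⨅ x' ∈ U, ⨆ y : Y, ((x' y : EReal) - (g n y : EReal)))
        = (⨆ y : Y, ((x y : EReal) - (glim y : EReal))) ∧
      (⨆ U ∈ 𝓝 x, atTop.limsup fun n =>
          ⨅ x' ∈ U, ⨆ y : Y, ((x' y : EReal) - (g n y : EReal)))
        = (⨆ y : Y, ((x y : EReal) - (glim y : EReal))) := by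
  intro x
  have hlow : (⨆ y : Y, ((x y : EReal) - (glim y : EReal))) ≤
      (⨆ U ∈ 𝓝 x, atTop.liminf fun n =>
          ⨅ x' ∈ U, ⨆ y : Y, ((x' y : EReal) - (g n y : EReal))) := by
    refine iSup_le fun y => ?_
    rw [← EReal.coe_sub]
    refine EReal.ge_of_forall_gt_iff_ge.1 fun a ha => ?_
    have ha' : a < x y - glim y := by exact_mod_cast ha
    set ε : ℝ := (x y - glim y - a) / 2 with hε
    have hε0 : 0 < ε := by rw [hε]; linarith
    have hU : {x' : WeakDual ℝ Y | x y - ε < x' y} ∈ 𝓝 x :=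
      (WeakDual.eval_continuous y).continuousAt.eventually (lt_mem_nhds (by linarith))
    refine le_trans ?_ (le_iSup₂_of_le _ hU le_rfl)
    refine le_liminf_of_le (by isBoundedDefault) ?_
    filter_upwards [(hlim y).eventually (gt_mem_nhds (show glim y < glim y + ε by linarith))]
      with n hn
    refine le_iInf₂ fun x' hx' => le_iSup_of_le y ?_
    have hx2 : x y - ε < x' y := hx'
    have : a ≤ x' y - g n y := by linarith
    exact_mod_cast this
  have hup : (⨆ U ∈ 𝓝 x, atTop.limsup fun n =>
          ⨅ x' ∈ U, ⨆ y : Y, ((x' y : EReal) - (g n y : EReal))) ≤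
      (⨆ y : Y, ((x y : EReal) - (glim y : EReal))) := by
    refine iSup₂_le fun U hU => ?_
    refine EReal.le_of_forall_lt_iff_le.1 fun M hM => ?_
    obtain ⟨M₀, h1, h2⟩ := EReal.lt_iff_exists_real_btwn.1 hM
    have := aux_upper g hconv glim hlim c hc hbound x U hU M₀ M (by exact_mod_cast h2) (by
      intro y
      have := (le_iSup (fun y : Y => ((x y : EReal) - (glim y : EReal))) y).trans h1.le
      exact_mod_cast this)
    refine limsup_le_of_le (by isBoundedDefault) ?_
    filter_upwards [this] with n hn
    obtain ⟨x', hx', h⟩ := hn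
    refine (iInf₂_le x' hx').trans (iSup_le fun y => ?_)
    exact_mod_cast h y
  have hmid : (⨆ U ∈ 𝓝 x, atTop.liminf fun n =>
          ⨅ x' ∈ U, ⨆ y : Y, ((x' y : EReal) - (g n y : EReal))) ≤
      (⨆ U ∈ 𝓝 x, atTop.limsup fun n =>
          ⨅ x' ∈ U, ⨆ y : Y, ((x' y : EReal) - (g n y : EReal))) :=
    iSup₂_mono fun U _ => liminf_le_limsup
  exact ⟨le_antisymm (hmid.trans hup) hlow, le_antisymm hup (hlow.trans hmid)⟩
end

section
/- Let Z, X be Polish spaces, μ ∈ P(Z), and (P_z)_{z∈Z} a Feller system of probability measures on X. Define ψ(F) = ∫_Z log(∫_X e^{F(z,x)} P_z(dx)) μ(dz) for F ∈ C_b(Z×X) and ψ*(q) = sup_{F∈C_b(Z×X)} {⟨F,q⟩ − ψ(F)} for q in the dual of C_b(Z×X). Then ψ*(q) < +∞ implies that q is (represented by) a Borel probability measure on Z×X with Z-marginal equal to μ, and for such q, ψ*(q) = ∫_Z H(q^z | P_z) μ(dz) = H(q | μ⊗P_·). -/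
open MeasureTheory ProbabilityTheory Classical
open scoped ENNReal BoundedContinuousFunction

/-- Relative entropy `H(Q|P) = ∫ log(dQ/dP) dQ` if `Q ≪ P` (and the log-likelihood
ratio is integrable), `+∞` otherwise. -/
noncomputable def relEntropy {α : Type*} [MeasurableSpace α] (Q P : Measure α) : ℝ≥0∞ :=
  if Q ≪ P ∧ Integrable (llr Q P) Q then ENNReal.ofReal (∫ x, llr Q P x ∂Q) else ⊤

theorem aux_stoneCech_inj {Y : Type*} [MetricSpace Y] :
    Function.Injective (stoneCechUnit : Y → StoneCech Y) := by
  intro a b h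
  have hc : Continuous (fun y : Y => (Set.projIcc (0:ℝ) 1 zero_le_one (dist y b))) :=
    continuous_projIcc.comp (by fun_prop)
  have h2 := congrArg Subtype.val (eq_if_stoneCechUnit_eq hc h)
  simp only [dist_self, Set.coe_projIcc] at h2
  by_contra hne
  have : 0 < dist a b := dist_pos.mpr hne
  have h3 : 0 < max 0 (min 1 (dist a b)) := lt_max_of_lt_right (lt_min one_pos this)
  rw [h2] at h3
  simp at h3

theorem aux_stoneCech_ext {Y : Type*} [TopologicalSpace Y] (F : Y →ᵇ ℝ) :
    ∃ G : C(StoneCech Y, ℝ), ∀ y, G (stoneCechUnit y) = F y := by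
  have hb : ∀ y, F y ∈ Set.Icc (-‖F‖) ‖F‖ := fun y => abs_le.mp (F.norm_coe_le_norm y)
  have hc : Continuous (fun y : Y => (⟨F y, hb y⟩ : Set.Icc (-‖F‖) ‖F‖)) :=
    F.continuous.subtype_mk hb
  let e : StoneCech Y → Set.Icc (-‖F‖) ‖F‖ := stoneCechExtend hc
  refine ⟨⟨fun b => (e b : ℝ),
    continuous_subtype_val.comp (continuous_stoneCechExtend hc)⟩, fun y => ?_⟩
  simp [e]

theorem aux_exp_int {Y : Type*} [MeasurableSpace Y] {p : Measure Y} [IsFiniteMeasure p]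
    {F : Y → ℝ} {M : ℝ} (hF : Measurable F) (hM : ∀ y, |F y| ≤ M) :
    Integrable (fun y => Real.exp (F y)) p := by
  refine Integrable.of_bound (by fun_prop) (Real.exp M) (Filter.Eventually.of_forall fun y => ?_)
  rw [Real.norm_eq_abs, Real.abs_exp]
  exact Real.exp_le_exp.mpr ((le_abs_self _).trans (hM y))

theorem aux_repr {Y : Type*} [MetricSpace Y] [CompleteSpace Y] [SecondCountableTopology Y]
    [MeasurableSpace Y] [BorelSpace Y] (p : Measure Y) [IsProbabilityMeasure p]
    (q : (Y →ᵇ ℝ) →L[ℝ] ℝ) (C : ℝ)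
    (hC : ∀ F : Y →ᵇ ℝ, q F ≤ C + ∫ y, (Real.exp (F y) - 1) ∂p)
    (hpos : ∀ F : Y →ᵇ ℝ, 0 ≤ F → 0 ≤ q F) (h1 : q 1 = 1) :
    ∃ m : Measure Y, IsProbabilityMeasure m ∧ ∀ F : Y →ᵇ ℝ, q F = ∫ y, F y ∂m := by
  let B := StoneCech Y
  let _ : MeasurableSpace B := borel B
  have : BorelSpace B := ⟨rfl⟩
  let u : C(Y, B) := ⟨stoneCechUnit, continuous_stoneCechUnit⟩
  let r : C(B, ℝ) → (Y →ᵇ ℝ) := fun f =>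
    (BoundedContinuousFunction.mkOfCompact f).compContinuous u
  let Λ : CompactlySupportedContinuousMap B ℝ →ₚ[ℝ] ℝ := PositiveLinearMap.mk₀
    { toFun := fun f => q (r f.toContinuousMap)
      map_add' := fun f g => by
        rw [← map_add]; rfl
      map_smul' := fun c f => by
        rw [← map_smul]; rfl }
    (fun f hf => hpos _ (fun y => hf (u y)))
  let ρ : Measure B := RealRMK.rieszMeasure Λ
  have hint : ∀ f : C(B, ℝ), ∫ b, f b ∂ρ = q (r f) := fun f =>
    RealRMK.integral_rieszMeasure Λ (CompactlySupportedContinuousMap.continuousMapEquiv f)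
  have : ρ.Regular := by
    show (RealRMK.rieszMeasure Λ).Regular
    infer_instance
  have : IsFiniteMeasure ρ := ⟨isCompact_univ.measure_lt_top⟩
  have hr1 : r 1 = 1 := rfl
  have hu1 : ρ.real Set.univ = 1 := by
    have := hint 1
    rw [hr1, h1] at this
    simpa using this
  have : IsProbabilityMeasure ρ := ⟨by
    rw [← ENNReal.toReal_eq_one_iff]; exact hu1⟩
  have hYne : Nonempty Y := by
    by_contra h
    rw [not_nonempty_iff] at h
    exact IsProbabilityMeasure.ne_zero p (Measure.eq_zero_of_isEmpty p)
  have hK : ∀ n : ℕ, ∃ K : Set Y, IsCompact K ∧ ρ (u '' K)ᶜ ≤ ENNReal.ofReal ((C + 1) / (n + 1)) := by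
    intro n
    obtain ⟨K, hKc, hKp⟩ := (isTightMeasureSet_iff_exists_isCompact_measure_compl_le.mp
      (isTightMeasureSet_singleton (μ := p))) (ENNReal.ofReal (Real.exp (-(n + 1 : ℝ))))
      (by simp [Real.exp_pos])
    refine ⟨K, hKc, ?_⟩
    have hKp := hKp p rfl
    have hKcl : IsClosed (u '' K) := (hKc.image u.continuous).isClosed
    rw [hKcl.isOpen_compl.measure_eq_iSup_isCompact]
    refine iSup₂_le fun L hL => iSup_le fun hLc => ?_
    obtain ⟨f, hf0, hf1, hf01⟩ := exists_continuous_zero_one_of_isClosed hKcl hLc.isClosed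
      (Set.subset_compl_iff_disjoint_left.mp hL)
    have hL1 : ρ.real L ≤ ∫ b, f b ∂ρ := by
      rw [← integral_indicator_one hLc.measurableSet]
      refine integral_mono ((integrable_const 1).indicator hLc.measurableSet)
        (Integrable.of_bound (f.continuous.aestronglyMeasurable) 1
          (Filter.Eventually.of_forall fun b => by
            rw [Real.norm_eq_abs, abs_le]; constructor <;> linarith [(hf01 b).1, (hf01 b).2])) ?_
      intro b
      by_cases hb : b ∈ L
      · simp [hb, hf1 hb]
      · simp [hb, (hf01 b).1]
    have hq := hC (((n + 1 : ℝ)) • r f)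
    have hKm : MeasurableSet K := hKc.isClosed.measurableSet
    have hI : ∫ y, (Real.exp ((((n + 1 : ℝ)) • r f) y) - 1) ∂p ≤ 1 := by
      have : ∀ y, (Real.exp ((((n + 1 : ℝ)) • r f) y) - 1) ≤
          Kᶜ.indicator (fun _ => Real.exp (n + 1 : ℝ)) y := by
        intro y
        have e : (((n + 1 : ℝ)) • r f) y = (n + 1 : ℝ) * f (u y) := rfl
        rw [e]
        by_cases hy : y ∈ K
        · have : f (u y) = 0 := hf0 (Set.mem_image_of_mem _ hy)
          simp [hy, this]
        · have h2 := (hf01 (u y)).2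
          have : Real.exp ((n + 1 : ℝ) * f (u y)) ≤ Real.exp (n + 1 : ℝ) := by
            apply Real.exp_le_exp.mpr
            have : (0:ℝ) ≤ n := by positivity
            nlinarith
          simp [hy]
          linarith
      calc _ ≤ ∫ y, Kᶜ.indicator (fun _ => Real.exp (n + 1 : ℝ)) y ∂p := by
            refine integral_mono ((aux_exp_int (M := ‖((n + 1 : ℝ)) • r f‖)
              (BoundedContinuousFunction.continuous _).measurable
              (fun y => BoundedContinuousFunction.norm_coe_le_norm (((n + 1 : ℝ)) • r f) y)).sub (integrable_const 1))
              ((integrable_const _).indicator hKm.compl) this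
        _ = p.real Kᶜ * Real.exp (n + 1 : ℝ) := by
            rw [integral_indicator_const _ hKm.compl]; rfl
        _ ≤ Real.exp (-(n + 1 : ℝ)) * Real.exp (n + 1 : ℝ) := by
            gcongr
            exact ENNReal.toReal_le_of_le_ofReal (Real.exp_pos _).le hKp
        _ = 1 := by rw [← Real.exp_add]; simp
    rw [map_smul, smul_eq_mul, ← hint] at hq
    have hn : (0:ℝ) < n + 1 := by positivity
    have : ρ.real L ≤ (C + 1) / (n + 1) := by
      rw [le_div_iff₀ hn]
      nlinarith
    rw [← ofReal_measureReal]
    exact ENNReal.ofReal_le_ofReal this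
  choose K hKc hKρ using hK
  have hui : Function.Injective u := aux_stoneCech_inj
  let S : Set B := ⋃ n, u '' K n
  have hSm : MeasurableSet S := MeasurableSet.iUnion fun n =>
    ((hKc n).image u.continuous).isClosed.measurableSet
  have hS0 : ρ Sᶜ = 0 := by
    have ht : Filter.Tendsto (fun n : ℕ => ENNReal.ofReal ((C + 1) / (n + 1))) Filter.atTop
        (nhds 0) := by
      rw [← ENNReal.ofReal_zero]
      refine ENNReal.tendsto_ofReal ?_
      have := tendsto_one_div_add_atTop_nhds_zero_nat (𝕜 := ℝ).const_mul (C + 1)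
      simpa [div_eq_mul_inv] using this
    refine le_antisymm (ge_of_tendsto' ht fun n => ?_) (zero_le)
    exact (measure_mono (Set.compl_subset_compl.mpr (Set.subset_iUnion (fun n => u '' K n) n))).trans (hKρ n)
  let g : B → Y := fun b => if b ∈ S then Function.invFun u b else hYne.some
  have hgm : Measurable g := by
    refine measurable_of_isClosed fun T hT => ?_
    have he : g ⁻¹' T = (⋃ n, u '' (K n ∩ T)) ∪ (if hYne.some ∈ T then Sᶜ else ∅) := by
      ext b
      by_cases hb : b ∈ S
      · have hb' := hb
        obtain ⟨n, y, hy, rfl⟩ := Set.mem_iUnion.mp hb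
        have hg : g (u y) = y := by
          simp only [g, hb, if_true]
          exact Function.leftInverse_invFun hui y
        have h2 : u y ∉ (if hYne.some ∈ T then Sᶜ else ∅) := by
          split_ifs <;> simp [hb]
        simp only [Set.mem_preimage, hg, Set.mem_union, h2, or_false, Set.mem_iUnion]
        constructor
        · intro h; exact ⟨n, y, ⟨hy, h⟩, rfl⟩
        · rintro ⟨k, y', ⟨_, h⟩, h'⟩
          rwa [← hui h']
      · have h3 : b ∉ ⋃ n, u '' (K n ∩ T) := by
          intro h
          obtain ⟨n, y, hy, rfl⟩ := Set.mem_iUnion.mp h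
          exact hb (Set.mem_iUnion.mpr ⟨n, y, hy.1, rfl⟩)
        simp only [Set.mem_preimage, g, hb, if_false, Set.mem_union, h3, false_or]
        split_ifs with h <;> simp [h, hb]
    rw [he]
    refine MeasurableSet.union (MeasurableSet.iUnion fun n =>
      (((hKc n).inter_right hT).image u.continuous).isClosed.measurableSet) ?_
    split_ifs
    · exact hSm.compl
    · exact MeasurableSet.empty
  refine ⟨ρ.map g, Measure.isProbabilityMeasure_map hgm.aemeasurable, fun F => ?_⟩
  obtain ⟨G, hG⟩ := aux_stoneCech_ext F
  have hrG : r G = F := by ext y; exact hG y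
  rw [integral_map hgm.aemeasurable F.continuous.aestronglyMeasurable, ← hrG, ← hint]
  refine integral_congr_ae ?_
  have hS : ∀ᵐ b ∂ρ, b ∈ S := hS0
  filter_upwards [hS] with b hb
  have hb' := hb
  obtain ⟨n, y, hy, rfl⟩ := Set.mem_iUnion.mp hb
  have hg : g (u y) = y := by
    simp only [g, hb, if_true]
    exact Function.leftInverse_invFun hui y
  rw [hg]
  rfl
theorem aux_bint {Y : Type*} [MeasurableSpace Y] {p : Measure Y} [IsFiniteMeasure p]
    {F : Y → ℝ} {M : ℝ} (hF : Measurable F) (hM : ∀ y, |F y| ≤ M) :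
    Integrable F p :=
  Integrable.of_bound hF.aestronglyMeasurable M (Filter.Eventually.of_forall hM)

theorem aux_ext_s15 {Y : Type*} [MetricSpace Y]
    [MeasurableSpace Y] [BorelSpace Y] (m p : Measure Y) [IsProbabilityMeasure p]
    [IsProbabilityMeasure m] (C : ℝ)
    (hC : ∀ F : Y →ᵇ ℝ, ∫ y, F y ∂m ≤ C + ∫ y, (Real.exp (F y) - 1) ∂p)
    {F : Y → ℝ} {M : ℝ} (hF : Measurable F) (hM : ∀ y, |F y| ≤ M) :
    ∫ y, F y ∂m ≤ C + ∫ y, (Real.exp (F y) - 1) ∂p := by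
  refine le_of_forall_pos_le_add fun ε hε => ?_
  have hM0 : 0 ≤ M := by
    have : Nonempty Y := by
      by_contra h
      rw [not_nonempty_iff] at h
      exact IsProbabilityMeasure.ne_zero p (Measure.eq_zero_of_isEmpty p)
    exact (abs_nonneg _).trans (hM this.some)
  have hδ : 0 < ε / (1 + Real.exp M) := by positivity
  set δ := ε / (1 + Real.exp M) with hδd
  have hεδ : ε = δ + Real.exp M * δ := by
    rw [hδd]; have := Real.exp_pos M; field_simp
  have hFi : ∀ ν : Measure Y, IsFiniteMeasure ν → Integrable F ν := fun ν _ => aux_bint hF hM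
  obtain ⟨g, hg, hgL⟩ := MemLp.exists_boundedContinuous_eLpNorm_sub_le (μ := m + p) (p := 1)
    ENNReal.one_ne_top (memLp_one_iff_integrable.mpr (hFi (m + p) inferInstance))
    (ε := ENNReal.ofReal δ) (by simpa using hδ)
  have hgb : ∀ y, |g y| ≤ ‖g‖ := fun y => g.norm_coe_le_norm y
  have hgi : ∀ ν : Measure Y, IsFiniteMeasure ν → Integrable (fun y => |F y - g y|) ν := fun ν _ =>
    ((aux_bint hF hM).sub (aux_bint g.continuous.measurable hgb)).abs
  have hD : ∫ y, |F y - g y| ∂m + ∫ y, |F y - g y| ∂p ≤ δ := by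
    rw [← integral_add_measure (hgi m inferInstance) (hgi p inferInstance)]
    rw [eLpNorm_one_eq_lintegral_enorm] at hg
    have := integral_norm_eq_lintegral_enorm (μ := m + p) (f := F - ⇑g)
      (hF.sub g.continuous.measurable).aestronglyMeasurable
    calc _ = ∫ y, ‖(F - ⇑g) y‖ ∂(m + p) := rfl
      _ ≤ δ := by rw [this]; exact ENNReal.toReal_le_of_le_ofReal hδ.le hg
  have hm0 : 0 ≤ ∫ y, |F y - g y| ∂m := integral_nonneg fun y => abs_nonneg _
  have hp0 : 0 ≤ ∫ y, |F y - g y| ∂p := integral_nonneg fun y => abs_nonneg _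
  let k : Y → ℝ := fun y => max (-M) (min M (g y))
  have hkb : ∀ y, |k y| ≤ M := fun y => abs_le.mpr
    ⟨le_max_left _ _, max_le (by linarith) (min_le_left _ _)⟩
  have hkc : Continuous k := by fun_prop
  have hFk : ∀ y, |F y - k y| ≤ |F y - g y| := by
    intro y
    have h1 := abs_le.mp (hM y)
    simp only [k]
    rcases max_cases (-M) (min M (g y)) with ⟨e, h⟩ | ⟨e, h⟩ <;>
    rcases min_cases M (g y) with ⟨e', h'⟩ | ⟨e', h'⟩ <;>
    rw [e] <;> (try rw [e'] at h) <;> (try rw [e']) <;>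
    rcases abs_cases (F y - g y) with ⟨e1, _⟩ | ⟨e1, _⟩ <;> rw [e1, abs_le] <;> constructor <;> linarith
  let G : Y →ᵇ ℝ := BoundedContinuousFunction.ofNormedAddCommGroup k hkc M hkb
  have h := hC G
  have hG : ∀ y, G y = k y := fun y => rfl
  simp only [hG] at h
  have hki : Integrable k m := aux_bint hkc.measurable hkb
  have h1 : ∫ y, F y ∂m - ∫ y, k y ∂m ≤ ∫ y, |F y - g y| ∂m := by
    rw [← integral_sub (hFi m inferInstance) hki]
    exact integral_mono ((hFi m inferInstance).sub hki) (hgi m inferInstance)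
      fun y => (le_abs_self _).trans (hFk y)
  have hek : Integrable (fun y => Real.exp (k y) - 1) p :=
    (aux_exp_int hkc.measurable hkb).sub (integrable_const 1)
  have heF : Integrable (fun y => Real.exp (F y) - 1) p :=
    (aux_exp_int hF hM).sub (integrable_const 1)
  have h2 : ∫ y, (Real.exp (k y) - 1) ∂p - ∫ y, (Real.exp (F y) - 1) ∂p
      ≤ Real.exp M * ∫ y, |F y - g y| ∂p := by
    rw [← integral_sub hek heF, ← integral_const_mul]
    refine integral_mono (hek.sub heF) ((hgi p inferInstance).const_mul _) fun y => ?_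
    have e1 := Real.add_one_le_exp (F y - k y)
    have e2 : Real.exp (F y) = Real.exp (k y) * Real.exp (F y - k y) := by
      rw [← Real.exp_add]; ring_nf
    have e3 : Real.exp (k y) ≤ Real.exp M := Real.exp_le_exp.mpr ((le_abs_self _).trans (hkb y))
    have e4 : -(F y - k y) ≤ |F y - g y| := (neg_le_abs _).trans (hFk y)
    have e5 := Real.exp_pos (k y)
    have e6 := abs_nonneg (F y - g y)
    calc _ = Real.exp (k y) * (1 - Real.exp (F y - k y)) := by rw [e2]; ring
      _ ≤ Real.exp (k y) * |F y - g y| := by gcongr; linarith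
      _ ≤ _ := by gcongr
  have h3 : Real.exp M * ∫ y, |F y - g y| ∂p ≤ Real.exp M * δ := by
    gcongr; linarith
  linarith

theorem aux_young {f a : ℝ} (hf : 0 ≤ f) :
    f * a ≤ InformationTheory.klFun f + (Real.exp a - 1) := by
  rw [InformationTheory.klFun_apply]
  rcases hf.eq_or_lt with rfl | hf
  · simp; positivity
  · have e1 := Real.add_one_le_exp (a - Real.log f)
    have e2 : Real.exp a = f * Real.exp (a - Real.log f) := by
      rw [Real.exp_sub, Real.exp_log hf]; field_simp
    rw [e2]
    nlinarith

theorem aux_nonneg {f a : ℝ} (h1 : 0 ≤ a → Real.exp a ≤ f) (h2 : a < 0 → f ≤ Real.exp a) :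
    0 ≤ f * a + 1 - Real.exp a := by
  have e : Real.exp a - 1 ≤ Real.exp a * a := by
    have := Real.add_one_le_exp (-a)
    have h : Real.exp a * Real.exp (-a) = 1 := by rw [← Real.exp_add]; simp
    have := Real.exp_pos a
    nlinarith
  rcases le_or_gt 0 a with h | h
  · nlinarith [h1 h]
  · nlinarith [h2 h]

theorem aux_lower {Y : Type*} 
    [MeasurableSpace Y] (m p : Measure Y) [IsProbabilityMeasure p]
    [IsProbabilityMeasure m] (C : ℝ)
    (hC : ∀ (F : Y → ℝ) (M : ℝ), Measurable F → (∀ y, |F y| ≤ M) →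
      ∫ y, F y ∂m ≤ C + ∫ y, (Real.exp (F y) - 1) ∂p) :
    m ≪ p ∧ InformationTheory.klDiv m p ≤ ENNReal.ofReal C := by
  have hac : m ≪ p := by
    refine Measure.AbsolutelyContinuous.mk fun A hA hpA => ?_
    have key : ∀ t : ℝ, 0 ≤ t → t * m.real A ≤ C := by
      intro t ht
      have := hC (A.indicator fun _ => t) t (measurable_const.indicator hA) (by
        intro y; by_cases hy : y ∈ A <;> simp [hy, abs_of_nonneg ht, ht])
      rw [integral_indicator_const _ hA] at this
      have h0 : ∫ y, (Real.exp (A.indicator (fun _ => t) y) - 1) ∂p = 0 := by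
        rw [← integral_zero Y ℝ (μ := p)]
        refine integral_congr_ae ?_
        have : ∀ᵐ y ∂p, y ∉ A := by rw [ae_iff]; simpa using hpA
        filter_upwards [this] with y hy
        simp [hy]
      rw [h0, smul_eq_mul] at this
      linarith
    have h0 : m.real A = 0 := by
      by_contra hne
      have hpos : 0 < m.real A := lt_of_le_of_ne measureReal_nonneg (Ne.symm hne)
      have hC0 : 0 ≤ C := by simpa using key 0 le_rfl
      have := key ((C + 1) / m.real A) (by positivity)
      rw [div_mul_cancel₀ _ hne] at this
      linarith
    rwa [measureReal_eq_zero_iff] at h0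
  refine ⟨hac, ?_⟩
  rw [InformationTheory.klDiv_eq_lintegral_klFun_of_ac hac]
  set f : Y → ℝ := fun y => (m.rnDeriv p y).toReal with hfd
  have hfm : Measurable f := (Measure.measurable_rnDeriv m p).ennreal_toReal
  have hf0 : ∀ y, 0 ≤ f y := fun y => ENNReal.toReal_nonneg
  let F : ℕ → Y → ℝ := fun n y => min (n + 1 : ℝ) (Real.log (max (f y) (Real.exp (-(n + 1 : ℝ)))))
  have hFm : ∀ n, Measurable (F n) := fun n =>
    measurable_const.min (Real.measurable_log.comp (hfm.max measurable_const))
  have hFb : ∀ n y, |F n y| ≤ (n + 1 : ℝ) := by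
    intro n y
    refine abs_le.mpr ⟨le_min (by have : (0:ℝ) ≤ n := by positivity
                                  linarith) ?_, min_le_left _ _⟩
    rw [Real.le_log_iff_exp_le (lt_max_of_lt_right (Real.exp_pos _))]
    exact le_max_right _ _
  let h : ℕ → Y → ℝ := fun n y => f y * F n y + 1 - Real.exp (F n y)
  have hh0 : ∀ n y, 0 ≤ h n y := by
    intro n y
    have hn : (0:ℝ) ≤ n := by positivity
    have hmp : 0 < max (f y) (Real.exp (-(n + 1 : ℝ))) := lt_max_of_lt_right (Real.exp_pos _)
    refine aux_nonneg (fun h0 => ?_) (fun h0 => ?_)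
    · have h1 : 0 ≤ Real.log (max (f y) (Real.exp (-(n + 1 : ℝ)))) := h0.trans (min_le_right _ _)
      rw [Real.le_log_iff_exp_le hmp, Real.exp_zero] at h1
      have h2 : Real.exp (-(n + 1 : ℝ)) < 1 := Real.exp_lt_one_iff.mpr (by linarith)
      have h3 : max (f y) (Real.exp (-(n + 1 : ℝ))) = f y := by
        rcases max_choice (f y) (Real.exp (-(n + 1 : ℝ))) with h | h
        · exact h
        · rw [h] at h1; linarith
      calc Real.exp (F n y) ≤ Real.exp (Real.log (max (f y) (Real.exp (-(n + 1 : ℝ))))) :=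
            Real.exp_le_exp.mpr (min_le_right _ _)
        _ = f y := by rw [Real.exp_log hmp, h3]
    · have h1 : F n y = Real.log (max (f y) (Real.exp (-(n + 1 : ℝ)))) := by
        rcases min_choice (n + 1 : ℝ) (Real.log (max (f y) (Real.exp (-(n + 1 : ℝ))))) with h | h
        · simp only [F, h] at h0; linarith
        · exact h
      rw [h1, Real.exp_log hmp]
      exact le_max_left _ _
  have hlim : ∀ y, Filter.Tendsto (fun n => h n y) Filter.atTop
      (nhds (InformationTheory.klFun (f y))) := by
    intro y
    have hat : Filter.Tendsto (fun n : ℕ => (n + 1 : ℝ)) Filter.atTop Filter.atTop :=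
      Filter.tendsto_atTop_add_const_right _ _ tendsto_natCast_atTop_atTop
    have hexp : Filter.Tendsto (fun n : ℕ => Real.exp (-(n + 1 : ℝ))) Filter.atTop (nhds 0) :=
      Real.tendsto_exp_neg_atTop_nhds_zero.comp hat
    rcases (hf0 y).eq_or_lt with h0 | h0
    · have : ∀ n, h n y = 1 - Real.exp (-(n + 1 : ℝ)) := by
        intro n
        have hn : (0:ℝ) ≤ n := by positivity
        simp only [h, F, ← h0]
        rw [max_eq_right (Real.exp_pos _).le, Real.log_exp, min_eq_right (by linarith)]
        ring
      simp only [this, ← h0, InformationTheory.klFun_zero]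
      simpa using hexp.const_sub 1
    · refine tendsto_const_nhds.congr' ?_
      filter_upwards [hexp.eventually_lt_const h0, hat.eventually_ge_atTop (Real.log (f y))]
        with n h1 h2
      simp only [h, F]
      rw [max_eq_left h1.le, min_eq_right h2, Real.exp_log h0, InformationTheory.klFun_apply]
  have hhm : ∀ n, Measurable (h n) := fun n =>
    ((hfm.mul (hFm n)).add measurable_const).sub (hFm n).exp
  have hfi : Integrable f p := Measure.integrable_toReal_rnDeriv
  have hle : ∀ n, ∫⁻ y, ENNReal.ofReal (h n y) ∂p ≤ ENNReal.ofReal C := by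
    intro n
    have hi1 : Integrable (fun y => f y * F n y) p :=
      hfi.mul_bdd (c := (n + 1 : ℝ)) (hFm n).aestronglyMeasurable (Filter.Eventually.of_forall (hFb n))
    have hi2 := aux_exp_int (p := p) (hFm n) (hFb n)
    have hi : Integrable (h n) p := (hi1.add (integrable_const 1)).sub hi2
    rw [← ofReal_integral_eq_lintegral_ofReal hi (Filter.Eventually.of_forall (hh0 n))]
    refine ENNReal.ofReal_le_ofReal ?_
    have := hC (F n) _ (hFm n) (hFb n)
    have e : ∫ y, h n y ∂p = ∫ y, F n y ∂m - ∫ y, (Real.exp (F n y) - 1) ∂p := by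
      rw [← integral_rnDeriv_smul hac, ← integral_sub]
      · refine integral_congr_ae (Filter.Eventually.of_forall fun y => ?_)
        simp only [h, f, smul_eq_mul]; ring
      · exact hi1
      · exact hi2.sub (integrable_const 1)
    linarith
  calc ∫⁻ y, ENNReal.ofReal (InformationTheory.klFun (f y)) ∂p
      = ∫⁻ y, Filter.liminf (fun n => ENNReal.ofReal (h n y)) Filter.atTop ∂p := by
        refine lintegral_congr fun y => ?_
        exact (ENNReal.tendsto_ofReal (hlim y)).liminf_eq.symm
    _ ≤ Filter.liminf (fun n => ∫⁻ y, ENNReal.ofReal (h n y) ∂p) Filter.atTop :=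
        lintegral_liminf_le fun n => (hhm n).ennreal_ofReal
    _ ≤ ENNReal.ofReal C := by
        refine (Filter.liminf_le_liminf (Filter.Eventually.of_forall hle)).trans ?_
        simp

theorem aux_upper_s15 {Y : Type*}
    [MeasurableSpace Y] (m p : Measure Y) [IsProbabilityMeasure p]
    [IsProbabilityMeasure m] (hne : InformationTheory.klDiv m p ≠ ⊤)
    {F : Y → ℝ} {M : ℝ} (hF : Measurable F) (hM : ∀ y, |F y| ≤ M) :
    ∫ y, F y ∂m ≤ (InformationTheory.klDiv m p).toReal + ∫ y, (Real.exp (F y) - 1) ∂p := by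
  obtain ⟨hac, hint⟩ := InformationTheory.klDiv_ne_top_iff.mp hne
  rw [InformationTheory.toReal_klDiv_eq_integral_klFun hac, ← integral_rnDeriv_smul hac]
  have hfi : Integrable (fun y => (m.rnDeriv p y).toReal) p := Measure.integrable_toReal_rnDeriv
  have hk := (InformationTheory.integrable_klFun_rnDeriv_iff hac).mpr hint
  have he : Integrable (fun y => Real.exp (F y) - 1) p :=
    (aux_exp_int hF hM).sub (integrable_const 1)
  rw [← integral_add hk he]
  exact integral_mono
    (hfi.mul_bdd (c := M) hF.aestronglyMeasurable (Filter.Eventually.of_forall hM))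
    (hk.add he) fun y => aux_young ENNReal.toReal_nonneg

theorem aux_chain {Z X : Type*} [MeasurableSpace Z] [MeasurableSpace X] 
    [MeasurableSpace.CountableOrCountablyGenerated Z X]
    (μ : Measure Z) [IsProbabilityMeasure μ] (κ P : Kernel Z X) [IsMarkovKernel κ]
    [IsMarkovKernel P] (hac : μ.compProd κ ≪ μ.compProd P) :
    InformationTheory.klDiv (μ.compProd κ) (μ.compProd P)
      = ∫⁻ z, InformationTheory.klDiv (κ z) (P z) ∂μ := by
  have hae := Measure.absolutelyContinuous_compProd_right_iff.mp hac
  have hm := Kernel.measurable_rnDeriv κ P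
  have hd : μ.compProd κ = (μ.compProd P).withDensity (fun x => Kernel.rnDeriv κ P x.1 x.2) := by
    rw [← Measure.compProd_withDensity hm]
    refine Measure.compProd_congr ?_
    filter_upwards [hae] with z hz
    rw [Kernel.withDensity_apply _ hm, withDensity_congr_ae Kernel.rnDeriv_eq_rnDeriv_measure,
      Measure.withDensity_rnDeriv_eq _ _ hz]
  have hr : (μ.compProd κ).rnDeriv (μ.compProd P) =ᵐ[μ.compProd P]
      (fun x => Kernel.rnDeriv κ P x.1 x.2) := by
    conv_lhs => rw [hd]
    exact Measure.rnDeriv_withDensity _ hm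
  rw [InformationTheory.klDiv_eq_lintegral_klFun_of_ac hac]
  have hr' : (fun x => ENNReal.ofReal (InformationTheory.klFun
      ((μ.compProd κ).rnDeriv (μ.compProd P) x).toReal)) =ᵐ[μ.compProd P]
      (fun x => ENNReal.ofReal (InformationTheory.klFun (Kernel.rnDeriv κ P x.1 x.2).toReal)) := by
    filter_upwards [hr] with x hx
    rw [hx]
  rw [lintegral_congr_ae hr', Measure.lintegral_compProd]
  · refine lintegral_congr_ae ?_
    filter_upwards [hae] with z hz
    rw [InformationTheory.klDiv_eq_lintegral_klFun_of_ac hz]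
    refine lintegral_congr_ae ?_
    filter_upwards [Kernel.rnDeriv_eq_rnDeriv_measure (κ := κ) (η := P) (a := z)] with x hx
    rw [hx]
  · exact (InformationTheory.measurable_klFun.comp
      (Measurable.ennreal_toReal hm)).ennreal_ofReal
theorem aux_relEntropy {α : Type*} [MeasurableSpace α] (Q P : Measure α)
    [IsProbabilityMeasure Q] [IsProbabilityMeasure P] :
    relEntropy Q P = InformationTheory.klDiv Q P := by
  rw [relEntropy, InformationTheory.klDiv_def]
  simp

theorem aux_zero {a C : ℝ} (h : ∀ t : ℝ, t * a ≤ C) : a = 0 := by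
  by_contra hne
  have := h ((C + 1) / a)
  rw [div_mul_cancel₀ _ hne] at this
  linarith

theorem aux_L_bound {X : Type*} [MeasurableSpace X] {ν : Measure X} [IsProbabilityMeasure ν]
    {F : X → ℝ} {M : ℝ} (hF : Measurable F) (hM : ∀ y, |F y| ≤ M) :
    0 < ∫ x, Real.exp (F x) ∂ν ∧ |Real.log (∫ x, Real.exp (F x) ∂ν)| ≤ M := by
  have hi := aux_exp_int (p := ν) hF hM
  have h1 : Real.exp (-M) ≤ ∫ x, Real.exp (F x) ∂ν := by
    calc Real.exp (-M) = ∫ x, Real.exp (-M) ∂ν := by simp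
      _ ≤ _ := integral_mono (integrable_const _) hi fun x =>
        Real.exp_le_exp.mpr (abs_le.mp (hM x)).1
  have h2 : ∫ x, Real.exp (F x) ∂ν ≤ Real.exp M := by
    calc _ ≤ ∫ x, Real.exp M ∂ν := integral_mono hi (integrable_const _) fun x =>
        Real.exp_le_exp.mpr (abs_le.mp (hM x)).2
      _ = _ := by simp
  have h0 := (Real.exp_pos _).trans_le h1
  exact ⟨h0, abs_le.mpr ⟨(Real.le_log_iff_exp_le h0).mpr h1, (Real.log_le_iff_le_exp h0).mpr h2⟩⟩

/-- Lemma `res-202`: with `ψ(F) = ∫_Z log ∫_X e^{F(z,x)} P_z(dx) μ(dz)` on `C_b(Z×X)`,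
any continuous linear functional `q` on `C_b(Z×X)` with `ψ*(q) < ∞` is represented by a
Borel probability measure on `Z×X` with `Z`-marginal `μ`, disintegrated by a Markov
kernel `κ`, and `ψ*(q) = H(q | μ⊗P) = ∫_Z H(q^z|P_z) μ(dz)`. -/
theorem stmt15 {Z X : Type*}
    [MetricSpace Z] [CompleteSpace Z] [TopologicalSpace.SeparableSpace Z]
    [MeasurableSpace Z] [BorelSpace Z]
    [MetricSpace X] [CompleteSpace X] [TopologicalSpace.SeparableSpace X]
    [MeasurableSpace X] [BorelSpace X]
    (μ : Measure Z) [IsProbabilityMeasure μ]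
    (P : Kernel Z X) [IsMarkovKernel P]
    (hFeller : ∀ f : X →ᵇ ℝ, Continuous fun z => ∫ x, f x ∂(P z))
    (q : ((Z × X) →ᵇ ℝ) →L[ℝ] ℝ)
    (hfin : (⨆ F : (Z × X) →ᵇ ℝ,
        (((q F - ∫ z, Real.log (∫ x, Real.exp (F (z, x)) ∂(P z)) ∂μ : ℝ)) : EReal)) < ⊤) :
    ∃ (m : Measure (Z × X)) (κ : Kernel Z X), IsProbabilityMeasure m ∧ IsMarkovKernel κ ∧
      (∀ F : (Z × X) →ᵇ ℝ, q F = ∫ p, F p ∂m) ∧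
      m.fst = μ ∧ m = μ.compProd κ ∧
      (⨆ F : (Z × X) →ᵇ ℝ,
          (((q F - ∫ z, Real.log (∫ x, Real.exp (F (z, x)) ∂(P z)) ∂μ : ℝ)) : EReal))
        = (relEntropy m (μ.compProd P) : EReal) ∧
      relEntropy m (μ.compProd P) = ∫⁻ z, relEntropy (κ z) (P z) ∂μ := by
  have : SecondCountableTopology Z := UniformSpace.secondCountable_of_separable Z
  have : SecondCountableTopology X := UniformSpace.secondCountable_of_separable X
  have hZne : Nonempty Z := by
    by_contra h
    rw [not_nonempty_iff] at h
    exact IsProbabilityMeasure.ne_zero μ (Measure.eq_zero_of_isEmpty μ)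
  have hXne : Nonempty X := by
    by_contra h
    rw [not_nonempty_iff] at h
    exact IsProbabilityMeasure.ne_zero (P hZne.some) (Measure.eq_zero_of_isEmpty _)
  set p : Measure (Z × X) := μ.compProd P with hp
  set s : EReal := (⨆ F : (Z × X) →ᵇ ℝ,
        (((q F - ∫ z, Real.log (∫ x, Real.exp (F (z, x)) ∂(P z)) ∂μ : ℝ)) : EReal)) with hs
  have hle : ∀ F : (Z × X) →ᵇ ℝ,
      (((q F - ∫ z, Real.log (∫ x, Real.exp (F (z, x)) ∂(P z)) ∂μ : ℝ)) : EReal) ≤ s :=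
    fun F => le_iSup (fun F : (Z × X) →ᵇ ℝ =>
      (((q F - ∫ z, Real.log (∫ x, Real.exp (F (z, x)) ∂(P z)) ∂μ : ℝ)) : EReal)) F
  have hsbot : s ≠ ⊥ := fun h => by
    have := hle 0
    rw [h, le_bot_iff] at this
    exact EReal.coe_ne_bot _ this
  obtain ⟨C, hsC⟩ : ∃ C : ℝ, s = (C : EReal) :=
    ⟨s.toReal, (EReal.coe_toReal hfin.ne hsbot).symm⟩
  have hψ : ∀ F : (Z × X) →ᵇ ℝ,
      q F - ∫ z, Real.log (∫ x, Real.exp (F (z, x)) ∂(P z)) ∂μ ≤ C := fun F => by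
    have := hle F
    rw [hsC] at this
    exact EReal.coe_le_coe_iff.mp this
  have hC0 : 0 ≤ C := by simpa using hψ 0
  have hb : ∀ (F : (Z × X) →ᵇ ℝ) y, |F y| ≤ ‖F‖ := fun F y => F.norm_coe_le_norm y
  have hFm : ∀ (F : (Z × X) →ᵇ ℝ), Measurable F := fun F => F.continuous.measurable
  have hFz : ∀ (F : (Z × X) →ᵇ ℝ) z, Measurable (fun x => F (z, x)) := fun F z =>
    (hFm F).comp measurable_prodMk_left
  have hIm : ∀ (F : (Z × X) →ᵇ ℝ), Measurable (fun z => ∫ x, Real.exp (F (z, x)) ∂(P z)) :=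
    fun F => (StronglyMeasurable.integral_kernel_prod_right' (κ := P)
      (f := fun y => Real.exp (F y)) (hFm F).exp.stronglyMeasurable).measurable
  have hLm : ∀ (F : (Z × X) →ᵇ ℝ),
      Measurable (fun z => Real.log (∫ x, Real.exp (F (z, x)) ∂(P z))) :=
    fun F => Real.measurable_log.comp (hIm F)
  have hLb : ∀ (F : (Z × X) →ᵇ ℝ) z,
      0 < ∫ x, Real.exp (F (z, x)) ∂(P z) ∧ |Real.log (∫ x, Real.exp (F (z, x)) ∂(P z))| ≤ ‖F‖ :=
    fun F z => aux_L_bound (hFz F z) (fun x => hb F (z, x))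
  -- the weaker bound against the product measure
  have hC : ∀ F : (Z × X) →ᵇ ℝ, q F ≤ C + ∫ y, (Real.exp (F y) - 1) ∂p := by
    intro F
    have h1 := hψ F
    have hi : Integrable (fun y => Real.exp (F y)) p := aux_exp_int (hFm F) (hb F)
    have h2 : ∫ z, Real.log (∫ x, Real.exp (F (z, x)) ∂(P z)) ∂μ
        ≤ ∫ y, (Real.exp (F y) - 1) ∂p := by
      rw [integral_sub hi (integrable_const 1), hp, Measure.integral_compProd hi]
      have hI : Integrable (fun z => ∫ x, Real.exp (F (z, x)) ∂(P z)) μ := by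
        refine aux_bint (hIm F) (M := Real.exp ‖F‖) fun z => ?_
        rw [abs_of_pos (hLb F z).1, ← Real.log_le_iff_le_exp (hLb F z).1]
        exact (abs_le.mp (hLb F z).2).2
      calc _ ≤ ∫ z, ((∫ x, Real.exp (F (z, x)) ∂(P z)) - 1) ∂μ :=
            integral_mono (aux_bint (hLm F) (fun z => (hLb F z).2))
              (hI.sub (integrable_const 1)) fun z => Real.log_le_sub_one_of_pos (hLb F z).1
        _ = _ := by rw [integral_sub hI (integrable_const 1)]; simp
    linarith
  have hmarg : ∀ f : Z →ᵇ ℝ,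
      q (f.compContinuous ⟨Prod.fst, continuous_fst⟩) = ∫ z, f z ∂μ := by
    intro f
    rw [← sub_eq_zero]
    refine aux_zero (C := C) fun t => ?_
    have := hψ (t • f.compContinuous ⟨Prod.fst, continuous_fst⟩)
    have e : ∀ z, Real.log (∫ x, Real.exp
        ((t • f.compContinuous ⟨Prod.fst, continuous_fst⟩ : (Z × X) →ᵇ ℝ) (z, x)) ∂(P z))
        = t * f z := by
      intro z
      have : ∀ x, (t • f.compContinuous ⟨Prod.fst, continuous_fst⟩ : (Z × X) →ᵇ ℝ) (z, x)
        = t * f z := fun x => rfl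
      simp [this]
    simp only [e] at this
    rw [integral_const_mul, map_smul, smul_eq_mul] at this
    linarith
  have h1 : q 1 = 1 := by
    have := hmarg 1
    rw [show ((1 : Z →ᵇ ℝ).compContinuous ⟨Prod.fst, continuous_fst⟩ : (Z × X) →ᵇ ℝ) = 1 from rfl]
      at this
    simpa using this
  have hpos : ∀ F : (Z × X) →ᵇ ℝ, 0 ≤ F → 0 ≤ q F := by
    intro F hF
    have hF' : ∀ y, 0 ≤ F y := fun y => hF y
    have key : ∀ t : ℝ, 0 ≤ t → -t * q F ≤ C := by
      intro t ht
      have := hC ((-t) • F)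
      rw [map_smul, smul_eq_mul] at this
      have h0 : ∫ y, (Real.exp (((-t) • F) y) - 1) ∂p ≤ 0 := by
        refine integral_nonpos fun y => ?_
        have : ((-t) • F) y = -t * F y := rfl
        rw [this]
        have : Real.exp (-t * F y) ≤ 1 := Real.exp_le_one_iff.mpr (by nlinarith [hF' y])
        simpa using this
      linarith
    by_contra hneg
    push Not at hneg
    have := key ((C + 1) / (- q F)) (div_nonneg (by linarith) (by linarith))
    rw [show -((C + 1) / (- q F)) * q F = (C + 1) / (- q F) * (- q F) by ring,
      div_mul_cancel₀ _ (by linarith)] at this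
    linarith
  obtain ⟨m, hm, hqm⟩ := aux_repr p q C hC hpos h1
  have hfst : m.fst = μ := by
    refine ext_of_forall_integral_eq_of_IsFiniteMeasure fun f => ?_
    rw [← hmarg f, hqm, Measure.fst,
      integral_map measurable_fst.aemeasurable f.continuous.aestronglyMeasurable]
    rfl
  have hdis : m = μ.compProd m.condKernel := by
    conv_lhs => rw [← m.disintegrate m.condKernel, hfst]
  have hlow := aux_lower m p C (fun F M hF hM => aux_ext_s15 m p C
    (fun G => by rw [← hqm]; exact hC G) hF hM)
  have hne : InformationTheory.klDiv m p ≠ ⊤ := (hlow.2.trans_lt ENNReal.ofReal_lt_top).ne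
  refine ⟨m, m.condKernel, hm, inferInstance, hqm, hfst, hdis, ?_, ?_⟩
  · rw [aux_relEntropy]
    have hk : ((InformationTheory.klDiv m p : ℝ≥0∞) : EReal)
        = ((InformationTheory.klDiv m p).toReal : EReal) := (EReal.coe_ennreal_toReal hne).symm
    refine le_antisymm ?_ ?_
    · rw [hk]
      refine iSup_le fun F => EReal.coe_le_coe_iff.mpr ?_
      let L : Z → ℝ := fun z => Real.log (∫ x, Real.exp (F (z, x)) ∂(P z))
      have hLm' : Measurable L := hLm F
      have hup := aux_upper_s15 m p hne (F := fun y => F y - L y.1) (M := ‖F‖ + ‖F‖)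
        ((hFm F).sub (hLm'.comp measurable_fst))
        (fun y => (abs_sub _ _).trans (add_le_add (hb F y) (hLb F y.1).2))
      have e1 : ∫ y, (Real.exp (F y - L y.1) - 1) ∂p = 0 := by
        have hi : Integrable (fun y => Real.exp (F y - L y.1)) p :=
          aux_exp_int (M := ‖F‖ + ‖F‖) ((hFm F).sub (hLm'.comp measurable_fst))
            (fun y => (abs_sub _ _).trans (add_le_add (hb F y) (hLb F y.1).2))
        rw [integral_sub hi (integrable_const 1), hp, Measure.integral_compProd hi]
        have : ∀ z, ∫ x, Real.exp (F (z, x) - L z) ∂(P z) = 1 := by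
          intro z
          simp only [Real.exp_sub, L, Real.exp_log (hLb F z).1]
          rw [integral_div, div_self (hLb F z).1.ne']
        simp [this]
      have e2 : ∫ y, (F y - L y.1) ∂m = q F - ∫ z, L z ∂μ := by
        rw [integral_sub (aux_bint (hFm F) (hb F)) (aux_bint (F := fun y : Z × X => L y.1) (hLm'.comp measurable_fst)
          (fun y => (hLb F y.1).2)), hqm]
        congr 1
        rw [← hfst, Measure.fst,
          integral_map measurable_fst.aemeasurable hLm'.aestronglyMeasurable]
      rw [e1, e2, add_zero] at hup
      exact hup
    · rw [hk, hsC]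
      refine EReal.coe_le_coe_iff.mpr (ENNReal.toReal_le_of_le_ofReal hC0 hlow.2)
  · rw [aux_relEntropy]
    have hac := hlow.1
    simp only [aux_relEntropy]
    have := aux_chain μ m.condKernel P (by rw [← hdis]; exact hac)
    rw [← hdis] at this
    exact this
end

section
/- Let X be a Polish space and ψ : C_b(X) → ℝ a function satisfying: (i) ψ(aF) ≤ 0 for all a ≤ 0 and all F ≥ 0 in C_b(X); (ii) ψ(c·1) = c for all constants c ∈ ℝ; (iii) for every sequence F_n ≥ 0 in C_b(X) decreasing pointwise to 0 and every a ≥ 0, lim_n ψ(aF_n) = 0. Then every continuous linear functional q on C_b(X) with sup_{F∈C_b(X)} {⟨F,q⟩ − ψ(F)} < ∞ is nonnegative, has total mass 1, and satisfies lim_n ⟨F_n,q⟩ = 0 for every such decreasing sequence; hence q is represented by a Borel probability measure on X. -/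
open MeasureTheory Filter Topology
open scoped ENNReal BoundedContinuousFunction

namespace Daniell

variable {X : Type*} [MetricSpace X]

/-- test functions for an open set -/
def Adm (U : Set X) (F : X →ᵇ ℝ) : Prop :=
  (∀ x, 0 ≤ F x) ∧ (∀ x, F x ≤ 1) ∧ ∀ x, x ∉ U → F x = 0

/-- content of an open set -/
noncomputable def tau (q : (X →ᵇ ℝ) →L[ℝ] ℝ) (U : Set X) : ℝ≥0∞ :=
  ⨆ (F : X →ᵇ ℝ) (_ : Adm U F), ENNReal.ofReal (q F)

lemma le_tau (q : (X →ᵇ ℝ) →L[ℝ] ℝ) {U : Set X} {F : X →ᵇ ℝ} (h : Adm U F) :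
    ENNReal.ofReal (q F) ≤ tau q U :=
  le_iSup₂ (f := fun (F : X →ᵇ ℝ) (_ : Adm U F) => ENNReal.ofReal (q F)) F h

lemma tau_mono (q : (X →ᵇ ℝ) →L[ℝ] ℝ) {U V : Set X} (h : U ⊆ V) : tau q U ≤ tau q V :=
  iSup₂_le fun _ hF => le_tau q ⟨hF.1, hF.2.1, fun x hx => hF.2.2 x fun hU => hx (h hU)⟩

lemma tau_empty (q : (X →ᵇ ℝ) →L[ℝ] ℝ) : tau q ∅ = 0 := by
  refine le_antisymm (iSup₂_le fun F hF => ?_) zero_le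
  have : F = 0 := by
    ext x; exact hF.2.2 x (by simp)
  simp [this]

lemma q_mono {q : (X →ᵇ ℝ) →L[ℝ] ℝ} (hq : ∀ F : X →ᵇ ℝ, (∀ x, 0 ≤ F x) → 0 ≤ q F)
    {F G : X →ᵇ ℝ} (h : ∀ x, F x ≤ G x) : q F ≤ q G := by
  have := hq (G - F) (fun x => by simpa using h x)
  rw [map_sub] at this
  linarith

lemma exists_approx (U : Set X) (hU : IsOpen U) : ∃ g : ℕ → X →ᵇ ℝ,
    (∀ n, Adm U (g n)) ∧ (∀ x, Monotone fun n => g n x) ∧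
    ∀ x ∈ U, Tendsto (fun n => g n x) atTop (𝓝 1) := by
  have hpos : ∀ n : ℕ, (0 : ℝ) < 1 / ((n : ℝ) + 1) := fun n => Nat.one_div_pos_of_nat
  let T : ℕ → X → NNReal := fun n => thickenedIndicator (hpos n) Uᶜ
  have hT1 : ∀ n x, T n x ≤ 1 := fun n x => thickenedIndicator_le_one (hpos n) _ x
  refine ⟨fun n => BoundedContinuousFunction.ofNormedAddCommGroup
    (fun x => 1 - (T n x : ℝ)) ?_ 1 ?_, ?_, ?_, ?_⟩
  · have : Continuous (T n) := (thickenedIndicator (hpos n) Uᶜ).continuous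
    fun_prop
  · intro x
    have h1 : (T n x : ℝ) ≤ 1 := by exact_mod_cast hT1 n x
    have h0 : (0 : ℝ) ≤ T n x := (T n x).2
    rw [Real.norm_eq_abs, abs_le]
    constructor <;> linarith
  · intro n
    refine ⟨fun x => ?_, fun x => ?_, fun x hx => ?_⟩
    · have h1 : (T n x : ℝ) ≤ 1 := by exact_mod_cast hT1 n x
      simpa using h1
    · have h0 : (0 : ℝ) ≤ T n x := (T n x).2
      simp
    · have : T n x = 1 := thickenedIndicator_one (hpos n) _ hx
      simp [this]
  · intro x n m hnm
    have : T m x ≤ T n x :=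
      thickenedIndicator_mono (hpos m) (hpos n) (Nat.one_div_le_one_div hnm) Uᶜ x
    have : (T m x : ℝ) ≤ T n x := by exact_mod_cast this
    change 1 - (T n x : ℝ) ≤ 1 - (T m x : ℝ)
    linarith
  · intro x hx
    have h := thickenedIndicator_tendsto_indicator_closure hpos
      tendsto_one_div_add_atTop_nhds_zero_nat Uᶜ
    have h2 := (tendsto_pi_nhds.1 h) x
    rw [hU.isClosed_compl.closure_eq, Set.indicator_of_notMem (by simpa using hx)] at h2
    have h3 : Tendsto (fun n => (T n x : ℝ)) atTop (𝓝 0) := by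
      exact NNReal.tendsto_coe.2 h2
    simpa using h3.const_sub 1

lemma tau_iUnion {q : (X →ᵇ ℝ) →L[ℝ] ℝ} (hq : ∀ F : X →ᵇ ℝ, (∀ x, 0 ≤ F x) → 0 ≤ q F)
    (hσ : ∀ F : ℕ → X →ᵇ ℝ, (∀ n x, 0 ≤ F n x) → (∀ x, Antitone fun n => F n x) →
      (∀ x, Tendsto (fun n => F n x) atTop (𝓝 0)) →
      Tendsto (fun n => q (F n)) atTop (𝓝 0))
    (U : ℕ → Set X) (hU : ∀ i, IsOpen (U i)) :
    tau q (⋃ i, U i) ≤ ∑' i, tau q (U i) := by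
  choose g hg hgm hgt using fun i => exists_approx (U i) (hU i)
  refine iSup₂_le fun F hF => ?_
  let S : ℕ → X →ᵇ ℝ := fun N => ∑ i ∈ Finset.range N, g i N
  have hS : ∀ N x, S N x = ∑ i ∈ Finset.range N, g i N x := fun N x => by
    simp [S, BoundedContinuousFunction.sum_apply]
  have hS0 : ∀ N x, 0 ≤ S N x := fun N x => by
    rw [hS]; exact Finset.sum_nonneg fun i _ => (hg i N).1 x
  have hSm : ∀ x, Monotone fun N => S N x := fun x N M hNM => by
    simp only [hS]
    calc _ ≤ ∑ i ∈ Finset.range N, g i M x := Finset.sum_le_sum fun i _ => hgm i x hNM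
      _ ≤ _ := Finset.sum_le_sum_of_subset_of_nonneg (Finset.range_mono hNM)
        fun i _ _ => (hg i M).1 x
  have hinf : ∀ N x, (F ⊓ S N) x = min (F x) (S N x) := fun N x => rfl
  have key := hσ (fun N => F - F ⊓ S N) ?_ ?_ ?_
  · have h4 : Tendsto (fun N => q (F ⊓ S N)) atTop (𝓝 (q F)) := by
      have := key.const_sub (q F)
      simpa using this
    refine le_of_tendsto (ENNReal.tendsto_ofReal h4) (Eventually.of_forall fun N => ?_)
    calc ENNReal.ofReal (q (F ⊓ S N)) ≤ ENNReal.ofReal (q (S N)) :=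
          ENNReal.ofReal_le_ofReal (q_mono hq fun x => by rw [hinf]; exact min_le_right _ _)
      _ = ∑ i ∈ Finset.range N, ENNReal.ofReal (q (g i N)) := by
          rw [map_sum, ENNReal.ofReal_sum_of_nonneg fun i _ => hq _ (hg i N).1]
      _ ≤ ∑ i ∈ Finset.range N, tau q (U i) := Finset.sum_le_sum fun i _ => le_tau q (hg i N)
      _ ≤ _ := ENNReal.sum_le_tsum _
  · intro N x
    simp [hinf]
  · intro x N M hNM
    have := hSm x hNM
    simp only [BoundedContinuousFunction.coe_sub, Pi.sub_apply, hinf]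
    have := min_le_min_left (F x) this
    simp only at this
    linarith
  · intro x
    by_cases hx : x ∈ ⋃ i, U i
    · obtain ⟨i, hi⟩ := Set.mem_iUnion.1 hx
      have h1 : Tendsto (fun n => 1 - g i n x) atTop (𝓝 0) := by
        simpa using (hgt i x hi).const_sub 1
      refine tendsto_of_tendsto_of_tendsto_of_le_of_le' tendsto_const_nhds h1 
        (Eventually.of_forall fun N => by simp [hinf]) ?_
      filter_upwards [eventually_gt_atTop i] with N hN
      simp only [BoundedContinuousFunction.coe_sub, Pi.sub_apply, hinf]
      have h2 : g i N x ≤ S N x := by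
        rw [hS]
        exact Finset.single_le_sum (f := fun i => g i N x) (fun i _ => (hg i N).1 x)
          (Finset.mem_range.2 hN)
      have h3 := hF.2.1 x
      have h4 := (hg i N).2.1 x
      rcases min_cases (F x) (S N x) with h | h <;> linarith
    · have h0 := hF.2.2 x hx
      simp [hinf, h0, hS0]

lemma tau_add {q : (X →ᵇ ℝ) →L[ℝ] ℝ} (hq : ∀ F : X →ᵇ ℝ, (∀ x, 0 ≤ F x) → 0 ≤ q F)
    {U V : Set X} (h : Disjoint U V) : tau q U + tau q V ≤ tau q (U ∪ V) := by
  unfold tau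
  refine ENNReal.biSup_add_biSup_le' ⟨0, by simp [Adm]⟩ ⟨0, by simp [Adm]⟩ fun F hF G hG => ?_
  rw [← ENNReal.ofReal_add (hq F hF.1) (hq G hG.1), ← map_add]
  refine le_tau q ⟨fun x => ?_, fun x => ?_, fun x hx => ?_⟩
  · exact add_nonneg (hF.1 x) (hG.1 x)
  · have h1 := hF.2.1 x
    have h2 := hG.2.1 x
    simp only [BoundedContinuousFunction.coe_add, Pi.add_apply]
    by_cases hx : x ∈ U
    · rw [hG.2.2 x (Set.disjoint_left.1 h hx)]; linarith
    · rw [hF.2.2 x hx]; linarith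
  · simp only [Set.mem_union, not_or] at hx
    simp [hF.2.2 x hx.1, hG.2.2 x hx.2]

lemma exists_measure [MeasurableSpace X] [BorelSpace X] {q : (X →ᵇ ℝ) →L[ℝ] ℝ}
    (hq : ∀ F : X →ᵇ ℝ, (∀ x, 0 ≤ F x) → 0 ≤ q F)
    (hσ : ∀ F : ℕ → X →ᵇ ℝ, (∀ n x, 0 ≤ F n x) → (∀ x, Antitone fun n => F n x) →
      (∀ x, Tendsto (fun n => F n x) atTop (𝓝 0)) →
      Tendsto (fun n => q (F n)) atTop (𝓝 0)) :
    ∃ m : Measure X, ∀ U : Set X, IsOpen U → m U = tau q U := by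
  let μ : OuterMeasure X := inducedOuterMeasure (fun U (_ : IsOpen U) => tau q U)
    isOpen_empty (tau_empty q)
  have hμ : ∀ U : Set X, IsOpen U → μ U = tau q U := fun U hU =>
    inducedOuterMeasure_eq' (fun f hf => isOpen_iUnion hf) (fun f hf => tau_iUnion hq hσ f hf)
      (fun _ _ _ _ h => tau_mono q h) hU
  have hμi : ∀ A : Set X, μ A = ⨅ (t : Set X) (_ : IsOpen t) (_ : A ⊆ t), tau q t := fun A =>
    inducedOuterMeasure_eq_iInf (fun f hf => isOpen_iUnion hf)
      (fun f hf => tau_iUnion hq hσ f hf) (fun _ _ _ _ h => tau_mono q h) A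
  have hm : μ.IsMetric := by
    rintro s t ⟨r, hr, hst⟩
    refine le_antisymm (measure_union_le s t) ?_
    rw [hμi (s ∪ t)]
    refine le_iInf fun W => le_iInf fun hW => le_iInf fun hsub => ?_
    let V1 : Set X := {x | Metric.infEDist x s < Metric.infEDist x t}
    let V2 : Set X := {x | Metric.infEDist x t < Metric.infEDist x s}
    have o1 : IsOpen V1 := isOpen_lt Metric.continuous_infEDist Metric.continuous_infEDist
    have o2 : IsOpen V2 := isOpen_lt Metric.continuous_infEDist Metric.continuous_infEDist
    have hd : Disjoint V1 V2 := Set.disjoint_left.2 fun x h1 h2 =>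
      lt_asymm (show Metric.infEDist x s < Metric.infEDist x t from h1) h2
    have s1 : s ⊆ V1 := fun x hx => by
      change Metric.infEDist x s < Metric.infEDist x t
      rw [Metric.infEDist_zero_of_mem hx]
      exact lt_of_lt_of_le (pos_iff_ne_zero.2 hr) (Metric.le_infEDist.2 fun y hy => hst x hx y hy)
    have s2 : t ⊆ V2 := fun x hx => by
      change Metric.infEDist x t < Metric.infEDist x s
      rw [Metric.infEDist_zero_of_mem hx]
      exact lt_of_lt_of_le (pos_iff_ne_zero.2 hr)
        (Metric.le_infEDist.2 fun y hy => by rw [edist_comm]; exact hst y hy x hx)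
    have hs : s ⊆ W ∩ V1 := Set.subset_inter (Set.subset_union_left.trans hsub) s1
    have ht : t ⊆ W ∩ V2 := Set.subset_inter (Set.subset_union_right.trans hsub) s2
    calc μ s + μ t ≤ μ (W ∩ V1) + μ (W ∩ V2) := add_le_add (measure_mono hs) (measure_mono ht)
      _ = tau q (W ∩ V1) + tau q (W ∩ V2) := by rw [hμ _ (hW.inter o1), hμ _ (hW.inter o2)]
      _ ≤ tau q ((W ∩ V1) ∪ (W ∩ V2)) :=
          tau_add hq (hd.mono Set.inter_subset_right Set.inter_subset_right)
      _ ≤ tau q W := tau_mono q (Set.union_subset Set.inter_subset_left Set.inter_subset_left)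
  refine ⟨μ.toMeasure hm.le_caratheodory, fun U hU => ?_⟩
  rw [toMeasure_apply _ _ hU.measurableSet, hμ U hU]

lemma sum_clamp (y : ℝ) (hy : 0 ≤ y) (n : ℕ) :
    ∑ k ∈ Finset.range n, min (max (y - k) 0) 1 = min y n := by
  induction n with
  | zero => simp [hy]
  | succ n ih =>
    rw [Finset.sum_range_succ, ih]
    push_cast
    grind

lemma sum_ind (y : ℝ) (hy : 0 ≤ y) (n : ℕ) :
    ∑ k ∈ Finset.range n, (if (k : ℝ) < y then (1 : ℝ) else 0) ≤ min (n : ℝ) (y + 1) := by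
  induction n with
  | zero => simp; linarith
  | succ n ih =>
    rw [Finset.sum_range_succ]
    push_cast
    grind

lemma q_le_integral [MeasurableSpace X] [BorelSpace X] {q : (X →ᵇ ℝ) →L[ℝ] ℝ}
    (hq : ∀ F : X →ᵇ ℝ, (∀ x, 0 ≤ F x) → 0 ≤ q F)
    (m : Measure X) [IsProbabilityMeasure m] (hm : ∀ U : Set X, IsOpen U → m U = tau q U)
    (F : X →ᵇ ℝ) (h0 : ∀ x, 0 ≤ F x) (h1 : ∀ x, F x ≤ 1) : q F ≤ ∫ x, F x ∂m := by
  have hint : Integrable (fun x => F x) m := F.integrable m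
  have main : ∀ n : ℕ, n * q F ≤ n * ∫ x, F x ∂m + 1 := by
    intro n
    let G : ℕ → X →ᵇ ℝ := fun k => BoundedContinuousFunction.ofNormedAddCommGroup
      (fun x => min (max (n * F x - k) 0) 1) (by fun_prop) 1 (fun x => by
        rw [Real.norm_eq_abs, abs_le]
        constructor
        · have : (0 : ℝ) ≤ min (max (n * F x - k) 0) 1 := by positivity
          linarith
        · exact min_le_right _ _)
    let A : ℕ → Set X := fun k => {x | (k : ℝ) < n * F x}
    have hA : ∀ k, IsOpen (A k) := fun k => isOpen_lt continuous_const (by fun_prop)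
    have hG : ∀ k, Adm (A k) (G k) := fun k => by
      refine ⟨fun x => ?_, fun x => min_le_right _ _, fun x hx => ?_⟩
      · change (0 : ℝ) ≤ min (max (n * F x - k) 0) 1
        positivity
      · have hx' : n * F x ≤ k := not_lt.1 hx
        change min (max (n * F x - k) 0) 1 = 0
        rw [max_eq_right (by linarith)]; simp
    have hqG : ∀ k, q (G k) ≤ m.real (A k) := fun k => by
      rw [measureReal_def, ← ENNReal.ofReal_le_iff_le_toReal (measure_ne_top _ _), hm _ (hA k)]
      exact le_tau q (hG k)
    have hsum : (n : ℝ) • F = ∑ k ∈ Finset.range n, G k := by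
      ext x
      rw [BoundedContinuousFunction.sum_apply]
      change (n : ℝ) * F x = ∑ k ∈ Finset.range n, min (max (n * F x - k) 0) 1
      rw [sum_clamp _ (mul_nonneg n.cast_nonneg (h0 x)), min_eq_left]
      exact mul_le_of_le_one_right n.cast_nonneg (h1 x)
    have hi : ∀ k ∈ Finset.range n, Integrable (fun x => if (k : ℝ) < n * F x then (1 : ℝ) else 0) m := by
      intro k _
      exact (integrable_const (1 : ℝ)).indicator (hA k).measurableSet
    calc n * q F = q ((n : ℝ) • F) := by simp
      _ = ∑ k ∈ Finset.range n, q (G k) := by rw [hsum, map_sum]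
      _ ≤ ∑ k ∈ Finset.range n, m.real (A k) := Finset.sum_le_sum fun k _ => hqG k
      _ = ∑ k ∈ Finset.range n, ∫ x, (if (k : ℝ) < n * F x then (1 : ℝ) else 0) ∂m := by
          refine Finset.sum_congr rfl fun k _ => ?_
          exact (integral_indicator_one (hA k).measurableSet).symm
      _ = ∫ x, ∑ k ∈ Finset.range n, (if (k : ℝ) < n * F x then (1 : ℝ) else 0) ∂m :=
          (integral_finset_sum _ hi).symm
      _ ≤ ∫ x, (n * F x + 1) ∂m := by
          refine integral_mono (integrable_finset_sum _ hi)
            ((hint.const_mul _).add (integrable_const _)) fun x => ?_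
          exact (sum_ind _ (mul_nonneg n.cast_nonneg (h0 x)) n).trans (min_le_right _ _)
      _ = _ := by
          rw [integral_add (hint.const_mul _) (integrable_const _), integral_const_mul]
          simp
  by_contra hlt
  push Not at hlt
  obtain ⟨n, hn⟩ := exists_nat_gt (1 / (q F - ∫ x, F x ∂m))
  rw [div_lt_iff₀ (by linarith)] at hn
  have := main n
  linarith

lemma repr [MeasurableSpace X] [BorelSpace X] {q : (X →ᵇ ℝ) →L[ℝ] ℝ}
    (hq : ∀ F : X →ᵇ ℝ, (∀ x, 0 ≤ F x) → 0 ≤ q F) (hq1 : q 1 = 1)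
    (hσ : ∀ F : ℕ → X →ᵇ ℝ, (∀ n x, 0 ≤ F n x) → (∀ x, Antitone fun n => F n x) →
      (∀ x, Tendsto (fun n => F n x) atTop (𝓝 0)) →
      Tendsto (fun n => q (F n)) atTop (𝓝 0)) :
    ∃ m : Measure X, IsProbabilityMeasure m ∧ ∀ F : X →ᵇ ℝ, q F = ∫ x, F x ∂m := by
  obtain ⟨m, hm⟩ := exists_measure hq hσ
  have hp : IsProbabilityMeasure m := by
    refine ⟨?_⟩
    rw [hm _ isOpen_univ]
    refine le_antisymm (iSup₂_le fun F hF => ?_) ?_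
    · have := q_mono hq (F := F) (G := 1) (fun x => hF.2.1 x)
      rw [hq1] at this
      simpa using ENNReal.ofReal_le_ofReal this
    · have : Adm (Set.univ : Set X) 1 := by simp [Adm]
      simpa [hq1] using le_tau q this
  refine ⟨m, hp, ?_⟩
  have h01 : ∀ F : X →ᵇ ℝ, (∀ x, 0 ≤ F x) → (∀ x, F x ≤ 1) → q F = ∫ x, F x ∂m := by
    intro F h0 h1
    refine le_antisymm (q_le_integral hq m hm F h0 h1) ?_
    have h := q_le_integral hq m hm (1 - F) (fun x => by simpa using h1 x)
      (fun x => by simpa using h0 x)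
    rw [map_sub, hq1] at h
    have h2 : ∫ x, (1 - F : X →ᵇ ℝ) x ∂m = 1 - ∫ x, F x ∂m := by
      have := integral_sub (integrable_const (1 : ℝ)) (F.integrable m)
      simpa using this
    linarith
  intro F
  let c : ℝ := 2 * ‖F‖ + 1
  have hc : 0 < c := by positivity
  let H : X →ᵇ ℝ := c⁻¹ • (F + ‖F‖ • 1)
  have hH : ∀ x, H x = c⁻¹ * (F x + ‖F‖) := fun x => by simp [H, mul_add]
  have hb : ∀ x, -‖F‖ ≤ F x ∧ F x ≤ ‖F‖ := fun x => abs_le.1 (F.norm_coe_le_norm x)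
  have h := h01 H (fun x => by
      rw [hH]; exact mul_nonneg (inv_nonneg.2 hc.le) (by linarith [(hb x).1])) (fun x => by
      rw [hH, inv_mul_le_iff₀ hc]
      simp only [c]
      linarith [(hb x).2, norm_nonneg F])
  have h2 : ∫ x, H x ∂m = c⁻¹ * (∫ x, F x ∂m + ‖F‖) := by
    simp only [hH]
    rw [integral_const_mul, integral_add (F.integrable m) (integrable_const _)]
    simp
  have h3 : q H = c⁻¹ * (q F + ‖F‖) := by
    simp [H, hq1, mul_add]
  rw [h2, h3] at h
  have := mul_left_cancel₀ (inv_ne_zero hc.ne') h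
  linarith

end Daniell

/-- Abstract step in the proof of Lemma `res-202`: if `ψ : C_b(X) → ℝ` satisfies
(i) `ψ(aF) ≤ 0` for `a ≤ 0`, `F ≥ 0`; (ii) `ψ(c·1) = c`; (iii) `ψ(aF_n) → 0` for every
`a ≥ 0` and every nonnegative sequence `F_n` decreasing pointwise to `0`, then any
continuous linear functional `q` on `C_b(X)` with `sup_F (⟨F,q⟩ − ψ(F)) < ∞` is
nonnegative, has unit mass, sends such decreasing sequences to `0`, and is represented
by a Borel probability measure on the Polish space `X`. -/
theorem stmt16 {X : Type*}
    [MetricSpace X] [CompleteSpace X] [TopologicalSpace.SeparableSpace X]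
    [MeasurableSpace X] [BorelSpace X]
    (ψ : (X →ᵇ ℝ) → ℝ)
    (h1 : ∀ a : ℝ, a ≤ 0 → ∀ F : X →ᵇ ℝ, (∀ x, 0 ≤ F x) → ψ (a • F) ≤ 0)
    (h2 : ∀ c : ℝ, ψ (c • (1 : X →ᵇ ℝ)) = c)
    (h3 : ∀ F : ℕ → X →ᵇ ℝ, (∀ n x, 0 ≤ F n x) → (∀ x, Antitone fun n => F n x) →
      (∀ x, Tendsto (fun n => F n x) atTop (𝓝 0)) →
      ∀ a : ℝ, 0 ≤ a → Tendsto (fun n => ψ (a • F n)) atTop (𝓝 0))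
    (q : (X →ᵇ ℝ) →L[ℝ] ℝ)
    (hfin : (⨆ F : X →ᵇ ℝ, ((q F - ψ F : ℝ) : EReal)) < ⊤) :
    (∀ F : X →ᵇ ℝ, (∀ x, 0 ≤ F x) → 0 ≤ q F) ∧
    q (1 : X →ᵇ ℝ) = 1 ∧
    (∀ F : ℕ → X →ᵇ ℝ, (∀ n x, 0 ≤ F n x) → (∀ x, Antitone fun n => F n x) →
      (∀ x, Tendsto (fun n => F n x) atTop (𝓝 0)) →
      Tendsto (fun n => q (F n)) atTop (𝓝 0)) ∧
    ∃ m : Measure X, IsProbabilityMeasure m ∧ ∀ F : X →ᵇ ℝ, q F = ∫ x, F x ∂m := by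
  have hC : ∃ C : ℝ, 0 ≤ C ∧ ∀ F : X →ᵇ ℝ, q F - ψ F ≤ C := by
    obtain ⟨r, hr, -⟩ := EReal.lt_iff_exists_real_btwn.1 hfin
    refine ⟨max r 0, le_max_right _ _, fun F => ?_⟩
    have : ((q F - ψ F : ℝ) : EReal) ≤ (r : EReal) :=
      (le_iSup (fun F : X →ᵇ ℝ => ((q F - ψ F : ℝ) : EReal)) F).trans hr.le
    exact (EReal.coe_le_coe_iff.1 this).trans (le_max_left _ _)
  obtain ⟨C, hC0, hC⟩ := hC
  have hq : ∀ F : X →ᵇ ℝ, (∀ x, 0 ≤ F x) → 0 ≤ q F := by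
    intro F hF
    by_contra hlt
    push Not at hlt
    have ha : -((C + 1) / (-q F)) ≤ 0 := by
      have : 0 ≤ (C + 1) / (-q F) := div_nonneg (by linarith) (by linarith)
      linarith
    have h := hC (-((C + 1) / (-q F)) • F)
    have h' := h1 _ ha F hF
    rw [map_smul, smul_eq_mul] at h
    have : -((C + 1) / (-q F)) * q F = C + 1 := by
      have := hlt.ne
      field_simp
    linarith
  have hq1 : q (1 : X →ᵇ ℝ) = 1 := by
    by_contra hne
    have hne' : q (1 : X →ᵇ ℝ) - 1 ≠ 0 := sub_ne_zero.2 hne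
    have h := hC (((C + 1) / (q (1 : X →ᵇ ℝ) - 1)) • 1)
    rw [h2, map_smul, smul_eq_mul] at h
    have : (C + 1) / (q (1 : X →ᵇ ℝ) - 1) * q 1 - (C + 1) / (q (1 : X →ᵇ ℝ) - 1) = C + 1 := by
      field_simp
    linarith
  have hσ : ∀ F : ℕ → X →ᵇ ℝ, (∀ n x, 0 ≤ F n x) → (∀ x, Antitone fun n => F n x) →
      (∀ x, Tendsto (fun n => F n x) atTop (𝓝 0)) →
      Tendsto (fun n => q (F n)) atTop (𝓝 0) := by
    intro F hF0 hFa hFt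
    rw [Metric.tendsto_atTop']
    intro ε hε
    have ha : 0 < (C + 1) / ε := by positivity
    have h := h3 F hF0 hFa hFt _ ha.le
    obtain ⟨N, hN⟩ := eventually_atTop.1 (h.eventually_lt_const (show (0 : ℝ) < 1 by norm_num))
    refine ⟨N, fun n hn => ?_⟩
    have h4 := hN n hn.le
    have h5 := hC (((C + 1) / ε) • F n)
    rw [map_smul, smul_eq_mul] at h5
    rw [Real.dist_eq, sub_zero, abs_of_nonneg (hq _ (hF0 n))]
    have h6 : (C + 1) / ε * q (F n) < (C + 1) / ε * ε := by
      rw [div_mul_cancel₀ _ hε.ne']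
      linarith
    exact lt_of_mul_lt_mul_left h6 ha.le
  exact ⟨hq, hq1, hσ, Daniell.repr hq hq1 hσ⟩
end
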